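/- Let u be a smooth strictly plurisubharmonic function on an open set Ω ⊆ ℂ^n satisfying det(u_{ij̄}) = e^{(n+1)u} on Ω. Set A = (u_{ij̄}), B = (u_{ij}), M = A − B·(Ā)⁻¹·B̄, and for each index i let 𝓑^(i) = ∂_i B − B·(Ā)⁻¹·(∂_i Ā). Then, as an identity of n×n matrix-valued functions on Ω, u^{ij̄} ∂_i∂_{j̄} M − (n+1)M = −u^{ij̄}·𝓑^(i)·(Ā)⁻¹·(𝓑^(j))* (summation over i, j), and in particular the Hermitian matrix u^{ij̄} ∂_i∂_{j̄} M − (n+1)M is non-positive definite at every point of Ω. -/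

import Mathlib

open Complex Matrix
open scoped ComplexOrder

noncomputable section

/-- Wirtinger derivative `∂/∂z_j` of a complex-valued function on `ℂⁿ`. -/
def wdz {n : ℕ} (f : (Fin n → ℂ) → ℂ) (j : Fin n) (z : Fin n → ℂ) : ℂ :=
  (fderiv ℝ f z (Pi.single j 1) - Complex.I * fderiv ℝ f z (Pi.single j Complex.I)) / 2

/-- Wirtinger derivative `∂/∂z̄_j` of a complex-valued function on `ℂⁿ`. -/
def wdzbar {n : ℕ} (f : (Fin n → ℂ) → ℂ) (j : Fin n) (z : Fin n → ℂ) : ℂ :=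
  (fderiv ℝ f z (Pi.single j 1) + Complex.I * fderiv ℝ f z (Pi.single j Complex.I)) / 2

/-- A real-valued function on `ℂⁿ` viewed as complex-valued. -/
def cplx {n : ℕ} (u : (Fin n → ℂ) → ℝ) : (Fin n → ℂ) → ℂ := fun z => (u z : ℂ)

/-- The complex Hessian `A = (u_{ij̄}) = (∂_i ∂_{j̄} u)`. -/
def hessA {n : ℕ} (u : (Fin n → ℂ) → ℝ) (z : Fin n → ℂ) : Matrix (Fin n) (Fin n) ℂ :=
  Matrix.of fun i j => wdz (wdzbar (cplx u) j) i z

/-- The matrix `B = (u_{ij}) = (∂_i ∂_j u)`. -/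
def hessB {n : ℕ} (u : (Fin n → ℂ) → ℝ) (z : Fin n → ℂ) : Matrix (Fin n) (Fin n) ℂ :=
  Matrix.of fun i j => wdz (wdz (cplx u) j) i z

/-- `u^{ij̄}`, the entries of the inverse of the complex Hessian, with the convention
`∑_j u^{ij̄} u_{kj̄} = δ_{ik}`. -/
def uInv {n : ℕ} (u : (Fin n → ℂ) → ℝ) (z : Fin n → ℂ) (i j : Fin n) : ℂ :=
  (hessA u z)⁻¹ j i

/-- Entrywise Wirtinger derivative `∂_i` of a matrix-valued function. -/
def mwdz {n : ℕ} (F : (Fin n → ℂ) → Matrix (Fin n) (Fin n) ℂ) (i : Fin n) (z : Fin n → ℂ) :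
    Matrix (Fin n) (Fin n) ℂ :=
  Matrix.of fun p q => wdz (fun w => F w p q) i z

/-- Entrywise Wirtinger derivative `∂_{j̄}` of a matrix-valued function. -/
def mwdzbar {n : ℕ} (F : (Fin n → ℂ) → Matrix (Fin n) (Fin n) ℂ) (j : Fin n) (z : Fin n → ℂ) :
    Matrix (Fin n) (Fin n) ℂ :=
  Matrix.of fun p q => wdzbar (fun w => F w p q) j z

/-- Entrywise complex conjugate of a matrix. -/
def mconj {n : ℕ} (M : Matrix (Fin n) (Fin n) ℂ) : Matrix (Fin n) (Fin n) ℂ :=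
  M.map (starRingEnd ℂ)

/-- The real coordinate directions `x_1, …, x_n, y_1, …, y_n` of `ℂⁿ`. -/
def realDir {n : ℕ} : (Fin n ⊕ Fin n) → (Fin n → ℂ)
  | Sum.inl j => Pi.single j 1
  | Sum.inr j => Pi.single j Complex.I

/-- The real Hessian of `u : ℂⁿ → ℝ` in the coordinates `(x_1,…,x_n,y_1,…,y_n)`. -/
def realHess {n : ℕ} (u : (Fin n → ℂ) → ℝ) (z : Fin n → ℂ) :
    Matrix (Fin n ⊕ Fin n) (Fin n ⊕ Fin n) ℝ :=
  Matrix.of fun a b => fderiv ℝ (fun w => fderiv ℝ u w (realDir b)) z (realDir a)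

/-!
Consider the full complex Hessian `[[A, B], [B̄, Ā]]` and put `L = u^{ij̄} ∂_i ∂_{j̄}`.
Differentiating `log det A = (n + 1) u` along two arbitrary complexified directions and using the
symmetry of third and fourth derivatives shows that all four blocks `X` solve the same equation
`L X = (n + 1) X + u^{ij̄} ∂_{j̄} P · Ā⁻¹ · ∂_i Q`, where `P` is the block in the row of `X` and
the last column and `Q` the block in the last row and the column of `X`. When `L` is applied to the
Schur complement `M` of `Ā`, these quadratic terms cancel all those produced by the product rule
except `-u^{ij̄} 𝓑^(i) Ā⁻¹ (𝓑^(j))*`, and this sum is minus a congruence of the positive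
semidefinite matrix `(u^{ij̄}) ⊗ Ā⁻¹`.
-/

section DirDeriv

open Filter Ring
open scoped Topology

variable {E F G 𝔸 : Type*} [NormedAddCommGroup E] [NormedSpace ℝ E]
  [NormedAddCommGroup F] [NormedSpace ℂ F] [NormedAddCommGroup G] [NormedSpace ℂ G]
  [NormedRing 𝔸] [NormedAlgebra ℂ 𝔸] {z : E}

/-- The derivative of `f` along the complexified tangent vector `v + i w ∈ E ⊗ ℂ`, encoded as the
pair `ξ = (v, w)`. It treats `∂_j`, `∂_{j̄}` and their mixtures uniformly. -/
def dirDeriv (ξ : E × E) (f : E → F) (z : E) : F :=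
  fderiv ℝ f z ξ.1 + I • fderiv ℝ f z ξ.2

/-- Complex conjugation `v + i w ↦ v - i w` of complexified tangent vectors. -/
def conjTangent {E : Type*} [Neg E] (ξ : E × E) : E × E := (ξ.1, -ξ.2)

@[simp]
lemma conjTangent_conjTangent {E : Type*} [InvolutiveNeg E] (ξ : E × E) :
    conjTangent (conjTangent ξ) = ξ := by
  simp [conjTangent]

lemma dirDeriv_eventuallyEq {f g : E → F} (h : f =ᶠ[𝓝 z] g) (ξ : E × E) :
    dirDeriv ξ f =ᶠ[𝓝 z] dirDeriv ξ g := by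
  filter_upwards [h.fderiv (𝕜 := ℝ)] with w hw
  simp only [dirDeriv, hw]

lemma dirDeriv_congr {f g : E → F} (h : f =ᶠ[𝓝 z] g) (ξ : E × E) :
    dirDeriv ξ f z = dirDeriv ξ g z :=
  (dirDeriv_eventuallyEq h ξ).eq_of_nhds

lemma contDiffAt_dirDeriv {m k : WithTop ℕ∞} {f : E → F} (hf : ContDiffAt ℝ k f z)
    (hmk : m + 1 ≤ k) (ξ : E × E) : ContDiffAt ℝ m (dirDeriv ξ f) z :=
  have hf' := hf.fderiv_right hmk
  (hf'.clm_apply contDiffAt_const).add ((hf'.clm_apply contDiffAt_const).const_smul I)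

lemma dirDeriv_clm_comp (L : F →L[ℂ] G) {f : E → F} (hf : DifferentiableAt ℝ f z) (ξ : E × E) :
    dirDeriv ξ (fun w => L (f w)) z = L (dirDeriv ξ f z) := by
  have h : HasFDerivAt (fun w => L (f w)) ((L.restrictScalars ℝ).comp (fderiv ℝ f z)) z :=
    (L.restrictScalars ℝ).hasFDerivAt.comp z hf.hasFDerivAt
  simp [dirDeriv, h.fderiv]

lemma dirDeriv_sub {f g : E → F} (hf : DifferentiableAt ℝ f z) (hg : DifferentiableAt ℝ g z)
    (ξ : E × E) : dirDeriv ξ (fun w => f w - g w) z = dirDeriv ξ f z - dirDeriv ξ g z := by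
  simp only [dirDeriv, fderiv_fun_sub hf hg, _root_.sub_apply, smul_sub]
  abel

lemma dirDeriv_mul {f g : E → 𝔸} (hf : DifferentiableAt ℝ f z) (hg : DifferentiableAt ℝ g z)
    (ξ : E × E) :
    dirDeriv ξ (fun w => f w * g w) z = dirDeriv ξ f z * g z + f z * dirDeriv ξ g z := by
  simp only [dirDeriv, fderiv_fun_mul' hf hg, _root_.add_apply, _root_.smul_apply, smul_eq_mul,
    MulOpposite.smul_eq_mul_unop, MulOpposite.unop_op, smul_add, add_mul, mul_add, smul_mul_assoc,
    mul_smul_comm]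
  abel

lemma differentiableAt_ringInverse_comp [CompleteSpace 𝔸] {f : E → 𝔸}
    (hf : DifferentiableAt ℝ f z) (hu : IsUnit (f z)) :
    DifferentiableAt ℝ (fun w => (f w)⁻¹ʳ) z :=
  (differentiableAt_inverse hu).comp z hf

lemma dirDeriv_ringInverse [CompleteSpace 𝔸] {f : E → 𝔸} (hf : DifferentiableAt ℝ f z)
    (hu : IsUnit (f z)) (ξ : E × E) :
    dirDeriv ξ (fun w => (f w)⁻¹ʳ) z = -((f z)⁻¹ʳ * dirDeriv ξ f z * (f z)⁻¹ʳ) := by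
  obtain ⟨a, ha⟩ := hu
  have hinv : HasFDerivAt (fun b : 𝔸 => b⁻¹ʳ) _ (f z) := ha ▸ hasFDerivAt_ringInverse (𝕜 := ℝ) a
  have h : HasFDerivAt (fun w => (f w)⁻¹ʳ) _ z := hinv.comp z hf.hasFDerivAt
  simp [dirDeriv, h.fderiv, ← ha, mul_add, add_mul, add_comm]

lemma dirDeriv_star [StarAddMonoid F] [StarModule ℂ F] [ContinuousStar F] (f : E → F) (ξ : E × E) :
    star (dirDeriv ξ f z) = dirDeriv (conjTangent ξ) (fun w => star (f w)) z := by
  simp [dirDeriv, conjTangent]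

lemma dirDeriv_comm {f : E → F} (hf : ContDiffAt ℝ 2 f z) (ξ η : E × E) :
    dirDeriv ξ (dirDeriv η f) z = dirDeriv η (dirDeriv ξ f) z := by
  have hsymm := hf.isSymmSndFDerivAt (by simp)
  have hdiff : DifferentiableAt ℝ (fderiv ℝ f) z :=
    (hf.fderiv_right (m := 1) (by norm_num)).differentiableAt one_ne_zero
  have hsecond (α β : E × E) : dirDeriv α (dirDeriv β f) z =
      fderiv ℝ (fderiv ℝ f) z α.1 β.1 + I • fderiv ℝ (fderiv ℝ f) z α.1 β.2 +
        I • (fderiv ℝ (fderiv ℝ f) z α.2 β.1 + I • fderiv ℝ (fderiv ℝ f) z α.2 β.2) := by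
    have h (v : E) :
        HasFDerivAt (fun w => fderiv ℝ f w v) ((fderiv ℝ (fderiv ℝ f) z).flip v) z := by
      simpa using hdiff.hasFDerivAt.clm_apply (hasFDerivAt_const v z)
    have hβ : HasFDerivAt (dirDeriv β f) _ z := (h β.1).add ((h β.2).const_smul I)
    rw [dirDeriv, hβ.fderiv]
    simp
  rw [hsecond, hsecond, hsymm.eq ξ.1 η.1, hsymm.eq ξ.1 η.2, hsymm.eq ξ.2 η.1, hsymm.eq ξ.2 η.2]
  simp only [smul_add]
  abel

lemma dirDeriv_dirDeriv_dirDeriv_rotate {f : E → F} (hf : ContDiffAt ℝ 3 f z) (ξ α β : E × E) :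
    dirDeriv ξ (dirDeriv α (dirDeriv β f)) z = dirDeriv α (dirDeriv β (dirDeriv ξ f)) z := by
  rw [dirDeriv_comm (contDiffAt_dirDeriv hf (by norm_num) β)]
  refine dirDeriv_congr ?_ α
  filter_upwards [(hf.of_le (by norm_num : (2 : WithTop ℕ∞) ≤ 3)).eventually (by simp)] with w hw
  exact dirDeriv_comm hw ξ β

lemma dirDeriv_dirDeriv_dirDeriv_dirDeriv_swap_pairs {f : E → F} (hf : ContDiffAt ℝ 4 f z)
    (ξ η α β : E × E) :
    dirDeriv ξ (dirDeriv η (dirDeriv α (dirDeriv β f))) z =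
      dirDeriv β (dirDeriv α (dirDeriv ξ (dirDeriv η f))) z := by
  have hrotate (α β γ : E × E) : dirDeriv α (dirDeriv β (dirDeriv γ f)) =ᶠ[𝓝 z]
      dirDeriv γ (dirDeriv α (dirDeriv β f)) := by
    filter_upwards [(hf.of_le (by norm_num : (3 : WithTop ℕ∞) ≤ 4)).eventually (by simp)] with w hw
    exact (dirDeriv_dirDeriv_dirDeriv_rotate hw γ α β).symm
  have hηα : ContDiffAt ℝ 2 (dirDeriv η (dirDeriv α f)) z :=
    contDiffAt_dirDeriv (contDiffAt_dirDeriv (m := 3) hf (by norm_num) α) (by norm_num) η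
  rw [dirDeriv_congr (hrotate η α β), dirDeriv_comm hηα, dirDeriv_congr (hrotate ξ η α)]

lemma dirDeriv_cexp {f : E → ℂ} (hf : DifferentiableAt ℝ f z) (ξ : E × E) :
    dirDeriv ξ (fun w => exp (f w)) z = exp (f z) * dirDeriv ξ f z := by
  simp only [dirDeriv, hf.hasFDerivAt.cexp.fderiv, _root_.smul_apply, smul_eq_mul]
  ring

end DirDeriv

section SchurComplement

open Filter Ring
open scoped Topology

variable {E 𝔸 : Type*} [NormedAddCommGroup E] [NormedSpace ℝ E]
  [NormedRing 𝔸] [NormedAlgebra ℂ 𝔸] [CompleteSpace 𝔸] {a b c d : E → 𝔸} {z : E}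

lemma dirDeriv_schurComplement (ha : DifferentiableAt ℝ a z) (hb : DifferentiableAt ℝ b z)
    (hc : DifferentiableAt ℝ c z) (hd : DifferentiableAt ℝ d z) (hu : IsUnit (d z)) (η : E × E) :
    dirDeriv η (fun w => a w - b w * (d w)⁻¹ʳ * c w) z =
      dirDeriv η a z - (dirDeriv η b z - b z * (d z)⁻¹ʳ * dirDeriv η d z) * (d z)⁻¹ʳ * c z
        - b z * (d z)⁻¹ʳ * dirDeriv η c z := by
  have hv := differentiableAt_ringInverse_comp hd hu
  rw [dirDeriv_sub ha (by fun_prop), dirDeriv_mul (by fun_prop) hc, dirDeriv_mul hb hv,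
    dirDeriv_ringInverse hd hu]
  noncomm_ring

lemma dirDeriv_dirDeriv_schurComplement (ha : ContDiffAt ℝ 2 a z) (hb : ContDiffAt ℝ 2 b z)
    (hc : ContDiffAt ℝ 2 c z) (hd : ContDiffAt ℝ 2 d z) (hu : IsUnit (d z)) (ξ η : E × E) :
    dirDeriv ξ (dirDeriv η fun w => a w - b w * (d w)⁻¹ʳ * c w) z =
      (dirDeriv ξ (dirDeriv η a) z - dirDeriv η b z * (d z)⁻¹ʳ * dirDeriv ξ c z)
      - (dirDeriv ξ (dirDeriv η b) z - dirDeriv η b z * (d z)⁻¹ʳ * dirDeriv ξ d z) *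
          ((d z)⁻¹ʳ * c z)
      - b z * (d z)⁻¹ʳ *
          (dirDeriv ξ (dirDeriv η c) z - dirDeriv η d z * (d z)⁻¹ʳ * dirDeriv ξ c z)
      + b z * (d z)⁻¹ʳ *
          (dirDeriv ξ (dirDeriv η d) z - dirDeriv η d z * (d z)⁻¹ʳ * dirDeriv ξ d z) *
            ((d z)⁻¹ʳ * c z)
      - (dirDeriv ξ b z - b z * (d z)⁻¹ʳ * dirDeriv ξ d z) * (d z)⁻¹ʳ *
          (dirDeriv η c z - dirDeriv η d z * (d z)⁻¹ʳ * c z) := by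
  have diffAt {f : E → 𝔸} {w : E} (hf : ContDiffAt ℝ 2 f w) : DifferentiableAt ℝ f w :=
    hf.differentiableAt two_ne_zero
  have diffAt' {f : E → 𝔸} (hf : ContDiffAt ℝ 2 f z) : DifferentiableAt ℝ (dirDeriv η f) z :=
    (contDiffAt_dirDeriv (m := 1) hf (by norm_num) η).differentiableAt one_ne_zero
  have hfirst : dirDeriv η (fun w => a w - b w * (d w)⁻¹ʳ * c w) =ᶠ[𝓝 z] fun w =>
      dirDeriv η a w - (dirDeriv η b w - b w * (d w)⁻¹ʳ * dirDeriv η d w) * (d w)⁻¹ʳ * c w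
        - b w * (d w)⁻¹ʳ * dirDeriv η c w := by
    filter_upwards [ha.eventually (by simp), hb.eventually (by simp), hc.eventually (by simp),
      hd.eventually (by simp), hd.continuousAt.eventually (Units.isOpen.mem_nhds hu)]
      with w ha hb hc hd hu
    exact dirDeriv_schurComplement (diffAt ha) (diffAt hb) (diffAt hc) (diffAt hd) hu η
  have ha' := diffAt' ha
  have hb' := diffAt' hb
  have hc' := diffAt' hc
  have hd' := diffAt' hd
  replace hb := diffAt hb
  replace hc := diffAt hc
  replace hd := diffAt hd
  have hv := differentiableAt_ringInverse_comp hd hu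
  rw [dirDeriv_congr hfirst, dirDeriv_sub (by fun_prop) (by fun_prop),
    dirDeriv_schurComplement ha' (by fun_prop) hc hd hu, dirDeriv_sub hb' (by fun_prop),
    dirDeriv_mul (by fun_prop) hd', dirDeriv_mul (by fun_prop) hc', dirDeriv_mul hb hv,
    dirDeriv_ringInverse hd hu]
  noncomm_ring

/-- The four hypotheses say that the blocks of `[[a, b], [c, d]]` all satisfy the same second-order
equation, whose quadratic part couples the last block column with the last block row. -/
theorem sum_smul_dirDeriv_dirDeriv_schurComplement {κ : Type*} [Fintype κ] (ξ η : κ → E × E)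
    (g : κ → ℂ) (r : ℂ) (ha : ContDiffAt ℝ 2 a z) (hb : ContDiffAt ℝ 2 b z)
    (hc : ContDiffAt ℝ 2 c z) (hd : ContDiffAt ℝ 2 d z) (hu : IsUnit (d z))
    (hLa : ∑ k, g k • (dirDeriv (ξ k) (dirDeriv (η k) a) z -
      dirDeriv (η k) b z * (d z)⁻¹ʳ * dirDeriv (ξ k) c z) = r • a z)
    (hLb : ∑ k, g k • (dirDeriv (ξ k) (dirDeriv (η k) b) z -
      dirDeriv (η k) b z * (d z)⁻¹ʳ * dirDeriv (ξ k) d z) = r • b z)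
    (hLc : ∑ k, g k • (dirDeriv (ξ k) (dirDeriv (η k) c) z -
      dirDeriv (η k) d z * (d z)⁻¹ʳ * dirDeriv (ξ k) c z) = r • c z)
    (hLd : ∑ k, g k • (dirDeriv (ξ k) (dirDeriv (η k) d) z -
      dirDeriv (η k) d z * (d z)⁻¹ʳ * dirDeriv (ξ k) d z) = r • d z) :
    ∑ k, g k • dirDeriv (ξ k) (dirDeriv (η k) fun w => a w - b w * (d w)⁻¹ʳ * c w) z
      - r • (a z - b z * (d z)⁻¹ʳ * c z) =
      -∑ k, g k •
        ((dirDeriv (ξ k) b z - b z * (d z)⁻¹ʳ * dirDeriv (ξ k) d z) * (d z)⁻¹ʳ *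
          (dirDeriv (η k) c z - dirDeriv (η k) d z * (d z)⁻¹ʳ * c z)) := by
  have hsum (P Q R S T : κ → 𝔸) (x y : 𝔸) :
      ∑ k, g k • (P k - Q k * y - x * R k + x * S k * y - T k) =
        ∑ k, g k • P k - (∑ k, g k • Q k) * y - x * (∑ k, g k • R k) +
          x * (∑ k, g k • S k) * y - ∑ k, g k • T k := by
    simp only [smul_sub, smul_add, Finset.sum_sub_distrib, Finset.sum_add_distrib,
      Finset.sum_mul, Finset.mul_sum, smul_mul_assoc, mul_smul_comm]
  have hcancel : b z * (d z)⁻¹ʳ * d z * ((d z)⁻¹ʳ * c z) = b z * (d z)⁻¹ʳ * c z := by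
    rw [mul_assoc _ (d z), mul_inverse_cancel_left _ _ hu]
  simp_rw [dirDeriv_dirDeriv_schurComplement ha hb hc hd hu]
  rw [hsum, hLa, hLb, hLc, hLd, smul_mul_assoc, mul_smul_comm, mul_smul_comm, smul_mul_assoc,
    hcancel, smul_sub, mul_assoc (b z)]
  abel

end SchurComplement

section Det

variable {ι 𝕜 : Type*} [Fintype ι] [DecidableEq ι]

lemma trace_adjugate_mul {R : Type*} [CommRing R] (A H : Matrix ι ι R) :
    (A.adjugate * H).trace = ∑ i, (A.updateRow i (H i)).det := by
  rw [Matrix.trace_mul_comm]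
  refine Finset.sum_congr rfl fun i _ => ?_
  rw [← Matrix.cramer_transpose_apply, Matrix.cramer_eq_adjugate_mulVec,
    ← Matrix.adjugate_transpose, Matrix.mulVec_transpose]
  rfl

lemma hasFDerivAt_det [NontriviallyNormedField 𝕜] [CompleteSpace 𝕜] (A : Matrix ι ι 𝕜) :
    HasFDerivAt Matrix.det (LinearMap.toContinuousLinearMap
      (Matrix.traceLinearMap ι 𝕜 𝕜 ∘ₗ LinearMap.mulLeft 𝕜 A.adjugate)) A := by
  let detCMM : ContinuousMultilinearMap 𝕜 (fun _ : ι => ι → 𝕜) 𝕜 :=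
    { (Matrix.detRowAlternating : (ι → 𝕜) [⋀^ι]→ₗ[𝕜] 𝕜).toMultilinearMap with
      cont := continuous_id.matrix_det }
  refine (detCMM.hasFDerivAt A).congr_fderiv (ContinuousLinearMap.ext fun H => ?_)
  exact (detCMM.linearDeriv_apply A H).trans (trace_adjugate_mul A H).symm

end Det

section MatrixValued

open Filter
-- Any norm compatible with multiplication would do; this one comes with a continuous `star`.
open scoped Topology Matrix.Norms.L2Operator

variable {E ι : Type*} [NormedAddCommGroup E] [NormedSpace ℝ E] [Fintype ι] [DecidableEq ι]
  {F : E → Matrix ι ι ℂ} {φ : E → ℂ} {z : E}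

lemma dirDeriv_apply_apply (hF : DifferentiableAt ℝ F z) (ξ : E × E) (p q : ι) :
    dirDeriv ξ F z p q = dirDeriv ξ (fun w => F w p q) z :=
  (dirDeriv_clm_comp (LinearMap.toContinuousLinearMap (Matrix.entryLinearMap ℂ ℂ p q))
    hF ξ).symm

lemma dirDeriv_trace (hF : DifferentiableAt ℝ F z) (ξ : E × E) :
    dirDeriv ξ (fun w => (F w).trace) z = (dirDeriv ξ F z).trace :=
  dirDeriv_clm_comp (LinearMap.toContinuousLinearMap (Matrix.traceLinearMap ι ℂ ℂ)) hF ξ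

lemma dirDeriv_det (hF : DifferentiableAt ℝ F z) (ξ : E × E) :
    dirDeriv ξ (fun w => (F w).det) z = ((F z).adjugate * dirDeriv ξ F z).trace := by
  have h : HasFDerivAt (fun w => (F w).det) _ z :=
    ((hasFDerivAt_det (F z)).restrictScalars ℝ).comp z hF.hasFDerivAt
  simp [dirDeriv, h.fderiv, mul_add]

lemma contDiffAt_matrix_of_apply {k : WithTop ℕ∞}
    (hF : ∀ p q, ContDiffAt ℝ k (fun w => F w p q) z) :
    ContDiffAt ℝ k F z := by
  refine ((Matrix.ofLinearEquiv ℝ).symm.toContinuousLinearEquiv.comp_contDiffAt_iff).1 ?_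
  exact contDiffAt_pi.2 fun p => contDiffAt_pi.2 fun q => hF p q

lemma trace_inv_mul_dirDeriv_of_det_eq_exp (hF : DifferentiableAt ℝ F z)
    (hφ : DifferentiableAt ℝ φ z) (hdet : ∀ᶠ w in 𝓝 z, (F w).det = exp (φ w)) (ξ : E × E) :
    ((F z)⁻¹ * dirDeriv ξ F z).trace = dirDeriv ξ φ z := by
  have hz : (F z).det = exp (φ z) := hdet.self_of_nhds
  have h := dirDeriv_congr hdet ξ
  rw [dirDeriv_det hF, dirDeriv_cexp hφ] at h
  rw [Matrix.inv_def, hz, Ring.inverse_eq_inv', Matrix.smul_mul, Matrix.trace_smul, h,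
    smul_eq_mul, inv_mul_cancel_left₀ (exp_ne_zero _)]

lemma trace_inv_mul_dirDeriv_dirDeriv_of_det_eq_exp (hF : ContDiffAt ℝ 2 F z)
    (hφ : ContDiffAt ℝ 2 φ z) (hdet : ∀ᶠ w in 𝓝 z, (F w).det = exp (φ w)) (ξ η : E × E) :
    ((F z)⁻¹ * (dirDeriv ξ (dirDeriv η F) z -
      dirDeriv ξ F z * (F z)⁻¹ * dirDeriv η F z)).trace = dirDeriv ξ (dirDeriv η φ) z := by
  have hfirst : (fun w => ((F w)⁻¹ * dirDeriv η F w).trace) =ᶠ[𝓝 z] dirDeriv η φ := by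
    filter_upwards [hF.eventually (by simp), hφ.eventually (by simp), hdet.eventually_nhds]
      with w hF hφ hdet
    exact trace_inv_mul_dirDeriv_of_det_eq_exp (hF.differentiableAt two_ne_zero)
      (hφ.differentiableAt two_ne_zero) hdet η
  have hη : DifferentiableAt ℝ (dirDeriv η F) z :=
    (contDiffAt_dirDeriv (m := 1) hF (by norm_num) η).differentiableAt one_ne_zero
  have hF' := hF.differentiableAt two_ne_zero
  have hu : IsUnit (F z) := by
    rw [Matrix.isUnit_iff_isUnit_det, hdet.self_of_nhds]
    exact (exp_ne_zero _).isUnit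
  have hinv := differentiableAt_ringInverse_comp hF' hu
  rw [← dirDeriv_congr hfirst ξ]
  simp only [Matrix.nonsing_inv_eq_ringInverse]
  rw [dirDeriv_trace (by fun_prop), dirDeriv_mul hinv hη, dirDeriv_ringInverse hF' hu]
  congr 1
  noncomm_ring

end MatrixValued

section MixedHess

open Filter
open scoped Topology Matrix.Norms.L2Operator

variable {E ι : Type*} [NormedAddCommGroup E] [NormedSpace ℝ E] {U φ : E → ℂ} {z : E}

/-- The matrix of second derivatives of `U` along two families of complexified tangent vectors; the
frames `∂` and `∂̄` give all four blocks of the full complex Hessian. -/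
def mixedHess (α β : ι → E × E) (U : E → ℂ) (z : E) : Matrix ι ι ℂ :=
  Matrix.of fun p q => dirDeriv (α p) (dirDeriv (β q) U) z

lemma mixedHess_transpose (hU : ContDiffAt ℝ 2 U z) (α β : ι → E × E) :
    (mixedHess α β U z)ᵀ = mixedHess β α U z :=
  Matrix.ext fun p q => dirDeriv_comm hU (α q) (β p)

lemma mixedHess_const_mul (hU : ContDiffAt ℝ 2 U z) (c : ℂ) (α β : ι → E × E) :
    mixedHess α β (fun w => c * U w) z = c • mixedHess α β U z := by
  ext p q
  have hβ : ∀ᶠ w in 𝓝 z, dirDeriv (β q) (fun w => c * U w) w = c * dirDeriv (β q) U w := by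
    filter_upwards [hU.eventually (by simp)] with w hw
    exact dirDeriv_clm_comp (ContinuousLinearMap.mul ℂ ℂ c) (hw.differentiableAt two_ne_zero) (β q)
  exact (dirDeriv_congr hβ (α p)).trans (dirDeriv_clm_comp (ContinuousLinearMap.mul ℂ ℂ c)
    ((contDiffAt_dirDeriv (m := 1) hU (by norm_num) (β q)).differentiableAt one_ne_zero) (α p))

lemma mixedHess_map_star (hreal : ∀ w, star (U w) = U w) (α β : ι → E × E) :
    (mixedHess α β U z).map star =
      mixedHess (fun p => conjTangent (α p)) (fun q => conjTangent (β q)) U z := by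
  ext p q
  simp only [mixedHess, Matrix.map_apply, Matrix.of_apply, dirDeriv_star, hreal]

lemma mixedHess_conjTranspose (hU : ContDiffAt ℝ 2 U z) (hreal : ∀ w, star (U w) = U w)
    (α β : ι → E × E) :
    (mixedHess α β U z)ᴴ =
      mixedHess (fun q => conjTangent (β q)) (fun p => conjTangent (α p)) U z := by
  rw [Matrix.conjTranspose, mixedHess_transpose hU,
    mixedHess_map_star hreal]

variable [Fintype ι] [DecidableEq ι]

lemma contDiffAt_mixedHess {k m : WithTop ℕ∞} (hU : ContDiffAt ℝ k U z) (hmk : m + 1 + 1 ≤ k)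
    (α β : ι → E × E) : ContDiffAt ℝ m (mixedHess α β U) z :=
  contDiffAt_matrix_of_apply fun p q =>
    contDiffAt_dirDeriv (contDiffAt_dirDeriv hU hmk (β q)) le_rfl (α p)

lemma dirDeriv_mixedHess_apply (hU : ContDiffAt ℝ 3 U z) (ξ : E × E) (α β : ι → E × E) (p q : ι) :
    dirDeriv ξ (mixedHess α β U) z p q = dirDeriv ξ (dirDeriv (α p) (dirDeriv (β q) U)) z :=
  dirDeriv_apply_apply ((contDiffAt_mixedHess (m := 1) hU (by norm_num) α β).differentiableAt
    one_ne_zero) ξ p q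

lemma dirDeriv_mixedHess_cycle (hU : ContDiffAt ℝ 3 U z) (α β γ : ι → E × E) (p q r : ι) :
    dirDeriv (α p) (mixedHess β γ U) z q r = dirDeriv (γ r) (mixedHess α β U) z p q := by
  rw [dirDeriv_mixedHess_apply hU, dirDeriv_mixedHess_apply hU,
    ← dirDeriv_dirDeriv_dirDeriv_rotate hU (γ r)]

lemma dirDeriv_dirDeriv_mixedHess_apply (hU : ContDiffAt ℝ 4 U z) (ξ η : E × E)
    (α β : ι → E × E) (p q : ι) :
    dirDeriv ξ (dirDeriv η (mixedHess α β U)) z p q =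
      dirDeriv ξ (dirDeriv η (dirDeriv (α p) (dirDeriv (β q) U))) z := by
  have hη : ContDiffAt ℝ 1 (dirDeriv η (mixedHess α β U)) z :=
    contDiffAt_dirDeriv (contDiffAt_mixedHess (m := 2) hU (by norm_num) α β) (by norm_num) η
  rw [dirDeriv_apply_apply (hη.differentiableAt one_ne_zero)]
  refine dirDeriv_congr ?_ ξ
  filter_upwards [(hU.of_le (by norm_num : (3 : WithTop ℕ∞) ≤ 4)).eventually (by simp)] with w hw
  exact dirDeriv_mixedHess_apply hw η α β p q

lemma dirDeriv_mixedHess_conjTranspose (hU : ContDiffAt ℝ 3 U z) (hreal : ∀ w, star (U w) = U w)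
    (ξ : E × E) (α β : ι → E × E) :
    (dirDeriv ξ (mixedHess α β U) z)ᴴ = dirDeriv (conjTangent ξ)
      (mixedHess (fun q => conjTangent (β q)) (fun p => conjTangent (α p)) U) z := by
  refine (dirDeriv_star _ ξ).trans (dirDeriv_congr ?_ _)
  filter_upwards [(hU.of_le (by norm_num : (2 : WithTop ℕ∞) ≤ 3)).eventually (by simp)] with w hw
  exact mixedHess_conjTranspose hw hreal α β

/-- By the symmetry of higher derivatives, the roles of the pairs `(i, j)` and `(p, q)` can be
exchanged. -/
lemma dirDeriv_dirDeriv_mixedHess_sub_mul_apply_swap (hU : ContDiffAt ℝ 4 U z)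
    (ξ η α β : ι → E × E) (i j p q : ι) :
    (dirDeriv (ξ i) (dirDeriv (η j) (mixedHess α β U)) z - dirDeriv (η j) (mixedHess α ξ U) z *
        (mixedHess η ξ U z)⁻¹ * dirDeriv (ξ i) (mixedHess η β U) z) p q =
      (dirDeriv (β q) (dirDeriv (α p) (mixedHess ξ η U)) z - dirDeriv (β q) (mixedHess ξ η U) z *
        (mixedHess ξ η U z)⁻¹ * dirDeriv (α p) (mixedHess ξ η U) z) i j := by
  have hU₃ : ContDiffAt ℝ 3 U z := hU.of_le (by norm_num)
  have hT := mixedHess_transpose (hU.of_le (by norm_num)) ξ η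
  rw [Matrix.sub_apply, Matrix.sub_apply, dirDeriv_dirDeriv_mixedHess_apply hU,
    dirDeriv_dirDeriv_mixedHess_apply hU, dirDeriv_dirDeriv_dirDeriv_dirDeriv_swap_pairs hU]
  simp only [Matrix.mul_apply, Finset.sum_mul, ← hT, ← Matrix.transpose_nonsing_inv,
    Matrix.transpose_apply, dirDeriv_mixedHess_cycle hU₃ ξ η β,
    ← dirDeriv_mixedHess_cycle hU₃ α ξ η]
  rw [Finset.sum_comm]
  simp only [mul_comm, mul_left_comm]

/-- Twice differentiating `log det (mixedHess ξ η U) = φ` gives one second-order equation for all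
the blocks `mixedHess α β U`. -/
lemma sum_inv_smul_dirDeriv_dirDeriv_mixedHess_sub_mul (hU : ContDiffAt ℝ 4 U z)
    (hφ : ContDiffAt ℝ 2 φ z) (ξ η α β : ι → E × E)
    (hdet : ∀ᶠ w in 𝓝 z, (mixedHess ξ η U w).det = exp (φ w)) :
    ∑ k : ι × ι, (mixedHess ξ η U z)⁻¹ k.2 k.1 •
      (dirDeriv (ξ k.1) (dirDeriv (η k.2) (mixedHess α β U)) z -
        dirDeriv (η k.2) (mixedHess α ξ U) z * (mixedHess η ξ U z)⁻¹ *
          dirDeriv (ξ k.1) (mixedHess η β U) z) = mixedHess α β φ z := by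
  ext p q
  simp only [Matrix.sum_apply, Matrix.smul_apply, smul_eq_mul,
    dirDeriv_dirDeriv_mixedHess_sub_mul_apply_swap hU]
  rw [Fintype.sum_prod_type_right]
  calc _ = dirDeriv (β q) (dirDeriv (α p) φ) z :=
        trace_inv_mul_dirDeriv_dirDeriv_of_det_eq_exp
          (contDiffAt_mixedHess hU (by norm_num) ξ η) hφ hdet (β q) (α p)
    _ = mixedHess α β φ z p q := dirDeriv_comm hφ (β q) (α p)

theorem sum_smul_dirDeriv_dirDeriv_schurComplement_mixedHess (hU : ContDiffAt ℝ 4 U z)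
    (ξ η : ι → E × E) (c : ℂ)
    (hdet : ∀ᶠ w in 𝓝 z, (mixedHess ξ η U w).det = exp (c * U w)) :
    ∑ k : ι × ι, (mixedHess ξ η U z)⁻¹ k.2 k.1 •
        dirDeriv (ξ k.1) (dirDeriv (η k.2) fun w =>
          mixedHess ξ η U w - mixedHess ξ ξ U w * (mixedHess η ξ U w)⁻¹ * mixedHess η η U w) z
      - c • (mixedHess ξ η U z - mixedHess ξ ξ U z * (mixedHess η ξ U z)⁻¹ * mixedHess η η U z) =
      -∑ k : ι × ι, (mixedHess ξ η U z)⁻¹ k.2 k.1 •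
        ((dirDeriv (ξ k.1) (mixedHess ξ ξ U) z -
            mixedHess ξ ξ U z * (mixedHess η ξ U z)⁻¹ * dirDeriv (ξ k.1) (mixedHess η ξ U) z) *
          (mixedHess η ξ U z)⁻¹ *
          (dirDeriv (η k.2) (mixedHess η η U) z -
            dirDeriv (η k.2) (mixedHess η ξ U) z * (mixedHess η ξ U z)⁻¹ * mixedHess η η U z)) := by
  have hU₂ : ContDiffAt ℝ 2 U z := hU.of_le (by norm_num)
  have hsmooth (α β : ι → E × E) : ContDiffAt ℝ 2 (mixedHess α β U) z :=
    contDiffAt_mixedHess hU (by norm_num) α β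
  have hunit : IsUnit (mixedHess η ξ U z) := by
    rw [← mixedHess_transpose hU₂ ξ η, Matrix.isUnit_transpose, Matrix.isUnit_iff_isUnit_det,
      hdet.self_of_nhds]
    exact (exp_ne_zero _).isUnit
  have hblock (α β : ι → E × E) :=
    (sum_inv_smul_dirDeriv_dirDeriv_mixedHess_sub_mul hU (contDiffAt_const.mul hU₂) ξ η α β
      hdet).trans (mixedHess_const_mul hU₂ c α β)
  simp only [Matrix.nonsing_inv_eq_ringInverse (A := mixedHess η ξ U _)] at hblock ⊢
  exact sum_smul_dirDeriv_dirDeriv_schurComplement _ _ _ c (hsmooth ξ η) (hsmooth ξ ξ)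
    (hsmooth η η) (hsmooth η ξ) hunit (hblock ξ η) (hblock ξ ξ) (hblock η η) (hblock η ξ)

end MixedHess

lemma posSemidef_sum_smul_mul_mul_conjTranspose {𝕜 κ m n : Type*} [RCLike 𝕜] [Fintype κ]
    [Finite m] [Fintype n] {G : Matrix κ κ 𝕜} {W : Matrix n n 𝕜} (hG : G.PosSemidef)
    (hW : W.PosSemidef) (K : κ → Matrix m n 𝕜) :
    (∑ k : κ × κ, G k.1 k.2 • (K k.1 * W * (K k.2)ᴴ)).PosSemidef := by
  let L : Matrix m (κ × n) 𝕜 := Matrix.of fun p a => K a.1 p a.2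
  convert (hG.kronecker hW).mul_mul_conjTranspose_same L using 1
  ext p q
  simp only [Matrix.sum_apply, Matrix.smul_apply, smul_eq_mul, Matrix.mul_apply,
    Matrix.conjTranspose_apply, Matrix.kroneckerMap_apply, Fintype.sum_prod_type, Finset.sum_mul,
    Finset.mul_sum, L, Matrix.of_apply]
  rw [Finset.sum_comm]
  refine Finset.sum_congr rfl fun j _ => ?_
  rw [Finset.sum_comm]
  simp only [mul_assoc, mul_left_comm]

section Wirtinger

open Filter
open scoped Topology Matrix.Norms.L2Operator

variable {n : ℕ} {u : (Fin n → ℂ) → ℝ} {F : (Fin n → ℂ) → Matrix (Fin n) (Fin n) ℂ} {z : Fin n → ℂ}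

/-- The complexified tangent vector `∂_j = (∂/∂x_j - i ∂/∂y_j) / 2`. -/
def wirtinger (j : Fin n) : (Fin n → ℂ) × (Fin n → ℂ) :=
  ((1 / 2 : ℝ) • Pi.single j 1, -(1 / 2 : ℝ) • Pi.single j I)

/-- The complexified tangent vector `∂_{j̄} = (∂/∂x_j + i ∂/∂y_j) / 2`. -/
def wirtingerBar (j : Fin n) : (Fin n → ℂ) × (Fin n → ℂ) := conjTangent (wirtinger j)

@[simp]
lemma conjTangent_wirtinger (j : Fin n) : conjTangent (wirtinger j) = wirtingerBar j := rfl

@[simp]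
lemma conjTangent_wirtingerBar (j : Fin n) : conjTangent (wirtingerBar j) = wirtinger j :=
  conjTangent_conjTangent _

lemma wdz_eq_dirDeriv (f : (Fin n → ℂ) → ℂ) (j : Fin n) : wdz f j = dirDeriv (wirtinger j) f := by
  funext z
  simp only [wdz, dirDeriv, wirtinger, map_smul, real_smul, smul_eq_mul]
  push_cast
  ring

lemma wdzbar_eq_dirDeriv (f : (Fin n → ℂ) → ℂ) (j : Fin n) :
    wdzbar f j = dirDeriv (wirtingerBar j) f := by
  funext z
  simp only [wdzbar, dirDeriv, wirtingerBar, conjTangent, wirtinger, map_smul, map_neg,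
    real_smul, smul_eq_mul]
  push_cast
  ring

lemma hessA_eq_mixedHess (u : (Fin n → ℂ) → ℝ) :
    hessA u = mixedHess wirtinger wirtingerBar (cplx u) := by
  funext z
  simp only [hessA, mixedHess, wdz_eq_dirDeriv, wdzbar_eq_dirDeriv]

lemma hessB_eq_mixedHess (u : (Fin n → ℂ) → ℝ) :
    hessB u = mixedHess wirtinger wirtinger (cplx u) := by
  funext z
  simp only [hessB, mixedHess, wdz_eq_dirDeriv]

lemma mconj_mixedHess (α β : Fin n → (Fin n → ℂ) × (Fin n → ℂ)) (w : Fin n → ℂ) :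
    mconj (mixedHess α β (cplx u) w) =
      mixedHess (fun p => conjTangent (α p)) (fun q => conjTangent (β q)) (cplx u) w :=
  mixedHess_map_star (fun w => conj_ofReal (u w)) α β

lemma mwdz_eq_dirDeriv (hF : DifferentiableAt ℝ F z) (i : Fin n) :
    mwdz F i z = dirDeriv (wirtinger i) F z := by
  ext p q
  rw [dirDeriv_apply_apply hF, ← wdz_eq_dirDeriv]
  rfl

lemma mwdzbar_eq_dirDeriv (hF : DifferentiableAt ℝ F z) (j : Fin n) :
    mwdzbar F j z = dirDeriv (wirtingerBar j) F z := by
  ext p q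
  rw [dirDeriv_apply_apply hF, ← wdzbar_eq_dirDeriv]
  rfl

lemma mwdz_mwdzbar_eq_dirDeriv (hF : ContDiffAt ℝ 2 F z) (i j : Fin n) :
    mwdz (mwdzbar F j) i z = dirDeriv (wirtinger i) (dirDeriv (wirtingerBar j) F) z := by
  have hbar : mwdzbar F j =ᶠ[𝓝 z] dirDeriv (wirtingerBar j) F := by
    filter_upwards [hF.eventually (by simp)] with w hw
    exact mwdzbar_eq_dirDeriv (hw.differentiableAt two_ne_zero) j
  have hdiff : DifferentiableAt ℝ (dirDeriv (wirtingerBar j) F) z :=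
    (contDiffAt_dirDeriv (m := 1) hF (by norm_num) _).differentiableAt one_ne_zero
  rw [mwdz_eq_dirDeriv (hdiff.congr_of_eventuallyEq hbar), dirDeriv_congr hbar]

/-- The matrix `M = A - B Ā⁻¹ B̄`, the Schur complement of `Ā` in the full complex Hessian. -/
def schurHess (u : (Fin n → ℂ) → ℝ) (z : Fin n → ℂ) : Matrix (Fin n) (Fin n) ℂ :=
  hessA u z - hessB u z * (mconj (hessA u z))⁻¹ * mconj (hessB u z)

/-- The matrix `𝓑^(i) = ∂_i B - B Ā⁻¹ ∂_i Ā`. -/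
def covDerivHessB (u : (Fin n → ℂ) → ℝ) (i : Fin n) (z : Fin n → ℂ) : Matrix (Fin n) (Fin n) ℂ :=
  mwdz (hessB u) i z - hessB u z * (mconj (hessA u z))⁻¹ * mwdz (fun w => mconj (hessA u w)) i z

lemma mconj_hessA (u : (Fin n → ℂ) → ℝ) (w : Fin n → ℂ) :
    mconj (hessA u w) = mixedHess wirtingerBar wirtinger (cplx u) w := by
  simp only [hessA_eq_mixedHess, mconj_mixedHess, conjTangent_wirtinger, conjTangent_wirtingerBar]

lemma mconj_hessB (u : (Fin n → ℂ) → ℝ) (w : Fin n → ℂ) :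
    mconj (hessB u w) = mixedHess wirtingerBar wirtingerBar (cplx u) w := by
  simp only [hessB_eq_mixedHess, mconj_mixedHess, conjTangent_wirtinger]

lemma schurHess_eq_mixedHess (u : (Fin n → ℂ) → ℝ) :
    schurHess u = fun w => mixedHess wirtinger wirtingerBar (cplx u) w -
      mixedHess wirtinger wirtinger (cplx u) w * (mixedHess wirtingerBar wirtinger (cplx u) w)⁻¹ *
        mixedHess wirtingerBar wirtingerBar (cplx u) w := by
  funext w
  rw [schurHess, mconj_hessA, mconj_hessB, hessA_eq_mixedHess, hessB_eq_mixedHess]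

lemma contDiffAt_schurHess (hu : ContDiffAt ℝ 4 (cplx u) z) (hdet : IsUnit (hessA u z).det) :
    ContDiffAt ℝ 2 (schurHess u) z := by
  have hsmooth (α β : Fin n → (Fin n → ℂ) × (Fin n → ℂ)) :
      ContDiffAt ℝ 2 (mixedHess α β (cplx u)) z := contDiffAt_mixedHess hu (by norm_num) α β
  have hunit : IsUnit (mixedHess wirtingerBar wirtinger (cplx u) z) := by
    rwa [← mixedHess_transpose (hu.of_le (by norm_num)), Matrix.isUnit_transpose,
      Matrix.isUnit_iff_isUnit_det, ← hessA_eq_mixedHess]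
  obtain ⟨a, ha⟩ := hunit
  have hinv : ContDiffAt ℝ 2 (fun w => (mixedHess wirtingerBar wirtinger (cplx u) w)⁻¹) z := by
    simp only [Matrix.nonsing_inv_eq_ringInverse]
    exact (ha ▸ contDiffAt_ringInverse ℝ a).comp z (hsmooth _ _)
  rw [schurHess_eq_mixedHess]
  exact (hsmooth _ _).sub (((hsmooth _ _).mul hinv).mul (hsmooth _ _))

lemma covDerivHessB_eq_mixedHess (hu : ContDiffAt ℝ 3 (cplx u) z) (i : Fin n) :
    covDerivHessB u i z = dirDeriv (wirtinger i) (mixedHess wirtinger wirtinger (cplx u)) z -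
      mixedHess wirtinger wirtinger (cplx u) z * (mixedHess wirtingerBar wirtinger (cplx u) z)⁻¹ *
        dirDeriv (wirtinger i) (mixedHess wirtingerBar wirtinger (cplx u)) z := by
  have hdiff (α β : Fin n → (Fin n → ℂ) × (Fin n → ℂ)) :
      DifferentiableAt ℝ (mixedHess α β (cplx u)) z :=
    (contDiffAt_mixedHess (m := 1) hu (by norm_num) α β).differentiableAt one_ne_zero
  simp only [covDerivHessB, mconj_hessA, hessB_eq_mixedHess, mwdz_eq_dirDeriv (hdiff _ _)]

lemma covDerivHessB_conjTranspose (hu : ContDiffAt ℝ 3 (cplx u) z) (j : Fin n) :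
    (covDerivHessB u j z)ᴴ =
      dirDeriv (wirtingerBar j) (mixedHess wirtingerBar wirtingerBar (cplx u)) z -
        dirDeriv (wirtingerBar j) (mixedHess wirtingerBar wirtinger (cplx u)) z *
          (mixedHess wirtingerBar wirtinger (cplx u) z)⁻¹ *
          mixedHess wirtingerBar wirtingerBar (cplx u) z := by
  have hreal (w : Fin n → ℂ) : star (cplx u w) = cplx u w := conj_ofReal (u w)
  have hu₂ : ContDiffAt ℝ 2 (cplx u) z := hu.of_le (by norm_num)
  simp only [covDerivHessB_eq_mixedHess hu, Matrix.conjTranspose_sub, Matrix.conjTranspose_mul,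
    Matrix.conjTranspose_nonsing_inv, mixedHess_conjTranspose hu₂ hreal,
    dirDeriv_mixedHess_conjTranspose hu hreal, conjTangent_wirtinger, conjTangent_wirtingerBar,
    Matrix.mul_assoc]

lemma mconj_eq_transpose {M : Matrix (Fin n) (Fin n) ℂ} (hM : M.IsHermitian) : mconj M = Mᵀ :=
  calc mconj M = (Mᴴ)ᵀ := rfl
    _ = Mᵀ := by rw [hM.eq]

lemma posSemidef_sum_uInv_smul (hA : (hessA u z).PosSemidef)
    (K : Fin n → Matrix (Fin n) (Fin n) ℂ) :
    (∑ i, ∑ j, uInv u z i j • (K i * (mconj (hessA u z))⁻¹ * (K j)ᴴ)).PosSemidef := by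
  rw [mconj_eq_transpose hA.isHermitian, ← Fintype.sum_prod_type']
  exact posSemidef_sum_smul_mul_mul_conjTranspose hA.inv.transpose hA.transpose.inv K

theorem laplacian_M_identity_and_nonpositive_general {n : ℕ} {u : (Fin n → ℂ) → ℝ}
    {z : Fin n → ℂ} (hu : ContDiffAt ℝ 4 u z) (c : ℂ)
    (hdet : ∀ᶠ w in 𝓝 z, (hessA u w).det = exp (c * u w)) :
    (∑ i, ∑ j, uInv u z i j • mwdz (mwdzbar (schurHess u) j) i z) - c • schurHess u z =
        -∑ i, ∑ j, uInv u z i j •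
          (covDerivHessB u i z * (mconj (hessA u z))⁻¹ * (covDerivHessB u j z)ᴴ) ∧
      ((hessA u z).PosSemidef →
        (-((∑ i, ∑ j, uInv u z i j • mwdz (mwdzbar (schurHess u) j) i z) -
          c • schurHess u z)).PosSemidef) := by
  have hu' : ContDiffAt ℝ 4 (cplx u) z := ofRealCLM.contDiff.contDiffAt.comp z hu
  have hu₃ : ContDiffAt ℝ 3 (cplx u) z := hu'.of_le (by norm_num)
  have hunit : IsUnit (hessA u z).det := hdet.self_of_nhds ▸ (exp_ne_zero _).isUnit
  have hid : (∑ i, ∑ j, uInv u z i j • mwdz (mwdzbar (schurHess u) j) i z) - c • schurHess u z =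
      -∑ i, ∑ j, uInv u z i j •
        (covDerivHessB u i z * (mconj (hessA u z))⁻¹ * (covDerivHessB u j z)ᴴ) := by
    simp only [mwdz_mwdzbar_eq_dirDeriv (contDiffAt_schurHess hu' hunit),
      covDerivHessB_conjTranspose hu₃, uInv, ← Fintype.sum_prod_type']
    simp only [covDerivHessB_eq_mixedHess hu₃, schurHess_eq_mixedHess, mconj_hessA]
    rw [hessA_eq_mixedHess] at hdet ⊢
    exact sum_smul_dirDeriv_dirDeriv_schurComplement_mixedHess hu' wirtinger wirtingerBar c hdet
  refine ⟨hid, fun hA => ?_⟩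
  rw [hid, neg_neg]
  exact posSemidef_sum_uInv_smul hA _

end Wirtinger

theorem laplacian_M_identity_and_nonpositive (n : ℕ) (Ω : Set (Fin n → ℂ)) (hΩ : IsOpen Ω)
    (u : (Fin n → ℂ) → ℝ) (hu : ContDiffOn ℝ (⊤ : ℕ∞) u Ω)
    (hpsh : ∀ z ∈ Ω, (hessA u z).PosDef)
    (hKE : ∀ z ∈ Ω, (hessA u z).det = (Real.exp ((n + 1) * u z) : ℂ)) :
    ∀ z ∈ Ω,
      (∑ i, ∑ j, uInv u z i j •
          mwdz (mwdzbar
            (fun w => hessA u w - hessB u w * (mconj (hessA u w))⁻¹ * mconj (hessB u w)) j) i z)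
        - ((n : ℂ) + 1) •
            (hessA u z - hessB u z * (mconj (hessA u z))⁻¹ * mconj (hessB u z))
      = -∑ i, ∑ j, uInv u z i j •
          ((mwdz (hessB u) i z -
              hessB u z * (mconj (hessA u z))⁻¹ * mwdz (fun w => mconj (hessA u w)) i z) *
            (mconj (hessA u z))⁻¹ *
            (mwdz (hessB u) j z -
              hessB u z * (mconj (hessA u z))⁻¹ * mwdz (fun w => mconj (hessA u w)) j z)ᴴ)
    ∧ (-((∑ i, ∑ j, uInv u z i j •
          mwdz (mwdzbar
            (fun w => hessA u w - hessB u w * (mconj (hessA u w))⁻¹ * mconj (hessB u w)) j) i z)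
        - ((n : ℂ) + 1) •
            (hessA u z - hessB u z * (mconj (hessA u z))⁻¹ * mconj (hessB u z)))).PosSemidef := by
  intro z hz
  obtain ⟨hid, hneg⟩ := laplacian_M_identity_and_nonpositive_general
    ((hu.contDiffAt (hΩ.mem_nhds hz)).of_le (WithTop.coe_le_coe.2 le_top)) ((n : ℂ) + 1) <| by
      filter_upwards [hΩ.mem_nhds hz] with w hw
      simpa using hKE w hw
  exact ⟨hid, hneg (hpsh z hz).posSemidef⟩

end
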